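/- arXiv:2405.07739 — 5 statements merged into one kernel-verified Lean document; each statement's English description precedes it below -/
import Mathlib

section
/- The function f : ℂ^{p×q} → ℝ, f(H) = min_{x∈ℂⁿ} h(H,x), is Fréchet differentiable at every H (viewing ℂ^{p×q} as a real inner product space with inner product Re tr(AᴴB)), and its gradient at H equals G(H) = βH − β𝓗(𝓛(𝓟_Ω s + β𝓗*H)); that is, f(H + Δ) − f(H) − Re tr(G(H)ᴴ Δ) = o(‖Δ‖_F) as Δ → 0. -/
open scoped BigOperators

namespace LPPG

/-- The Hankel operator. -/
noncomputable def hankel (p q n : ℕ) (hn : p + q = n + 1) (x : Fin n → ℂ) :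
    Matrix (Fin p) (Fin q) ℂ :=
  fun i j => x ⟨i.1 + j.1, by have hi := i.2; have hj := j.2; omega⟩

/-- The adjoint `𝓗*` of the Hankel operator. -/
noncomputable def hankelAdj (p q n : ℕ) (X : Matrix (Fin p) (Fin q) ℂ) : Fin n → ℂ :=
  fun a => ∑ i : Fin p, ∑ j : Fin q, if (i : ℕ) + (j : ℕ) = (a : ℕ) then X i j else 0

/-- The antidiagonal count `w_a`. -/
def w (p q : ℕ) (a : ℕ) : ℕ :=
  (Finset.univ.filter (fun ij : Fin p × Fin q => (ij.1 : ℕ) + (ij.2 : ℕ) = a)).card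

/-- The sampling operator `𝓟_Ω`. -/
def projOmega (n : ℕ) (Ω : Finset (Fin n)) (x : Fin n → ℂ) : Fin n → ℂ :=
  fun a => if a ∈ Ω then x a else 0

/-- The entrywise operator `𝓛`. -/
noncomputable def Lop (p q n : ℕ) (α β : ℝ) (Ω : Finset (Fin n)) (x : Fin n → ℂ) : Fin n → ℂ :=
  fun a => x a / ((α : ℂ) + (if a ∈ Ω then 1 else 0) + (β : ℂ) * (w p q (a : ℕ) : ℂ))

/-- `h(H, x)`. -/
noncomputable def hfun (p q n : ℕ) (hn : p + q = n + 1) (α β : ℝ) (Ω : Finset (Fin n))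
    (s : Fin n → ℂ) (H : Matrix (Fin p) (Fin q) ℂ) (x : Fin n → ℂ) : ℝ :=
  (1 / 2) * ∑ a : Fin n, ‖s a - projOmega n Ω x a‖ ^ 2
    + (β / 2) * ∑ i : Fin p, ∑ j : Fin q, ‖(H - hankel p q n hn x) i j‖ ^ 2
    + (α / 2) * ∑ a : Fin n, ‖x a‖ ^ 2

/-- `f(H) = min_x h(H,x)`. -/
noncomputable def fobj (p q n : ℕ) (hn : p + q = n + 1) (α β : ℝ) (Ω : Finset (Fin n))
    (s : Fin n → ℂ) (H : Matrix (Fin p) (Fin q) ℂ) : ℝ :=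
  ⨅ x : Fin n → ℂ, hfun p q n hn α β Ω s H x

/-- Frobenius norm of a complex matrix. -/
noncomputable def frobNorm (p q : ℕ) (A : Matrix (Fin p) (Fin q) ℂ) : ℝ :=
  Real.sqrt (∑ i : Fin p, ∑ j : Fin q, ‖A i j‖ ^ 2)

/-- Real Frobenius inner product `Re tr(Aᴴ B)`. -/
noncomputable def frobInner (p q : ℕ) (A B : Matrix (Fin p) (Fin q) ℂ) : ℝ :=
  (∑ i : Fin p, ∑ j : Fin q, (starRingEnd ℂ) (A i j) * B i j).re

/-- The gradient map `G(H) = βH − β𝓗(𝓛(𝓟_Ω s + β𝓗*H))`. -/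
noncomputable def Gmap (p q n : ℕ) (hn : p + q = n + 1) (α β : ℝ) (Ω : Finset (Fin n))
    (s : Fin n → ℂ) (H : Matrix (Fin p) (Fin q) ℂ) : Matrix (Fin p) (Fin q) ℂ :=
  β • H - β • hankel p q n hn (Lop p q n α β Ω (projOmega n Ω s + β • hankelAdj p q n H))

lemma hankelAdj_hankel (p q n : ℕ) (hn : p + q = n + 1) (x : Fin n → ℂ) (a : Fin n) :
    hankelAdj p q n (hankel p q n hn x) a = (w p q (a : ℕ) : ℂ) * x a := by
  unfold hankelAdj w hankel
  rw [Finset.card_filter, ← Finset.univ_product_univ, Finset.sum_product]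
  push_cast
  rw [Finset.sum_mul]
  refine Finset.sum_congr rfl fun i _ => ?_
  rw [Finset.sum_mul]
  refine Finset.sum_congr rfl fun j _ => ?_
  split_ifs with h
  · rw [one_mul]; congr 1; exact Fin.ext h
  · simp

lemma hankelAdj_sub (p q n : ℕ) (A B : Matrix (Fin p) (Fin q) ℂ) (a : Fin n) :
    hankelAdj p q n (A - B) a = hankelAdj p q n A a - hankelAdj p q n B a := by
  unfold hankelAdj
  simp only [← Finset.sum_sub_distrib]
  refine Finset.sum_congr rfl fun i _ => Finset.sum_congr rfl fun j _ => ?_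
  split_ifs <;> simp

lemma adj_identity (p q n : ℕ) (hn : p + q = n + 1) (A : Matrix (Fin p) (Fin q) ℂ)
    (y : Fin n → ℂ) :
    ∑ i : Fin p, ∑ j : Fin q, (starRingEnd ℂ) (A i j) * hankel p q n hn y i j
      = ∑ a : Fin n, (starRingEnd ℂ) (hankelAdj p q n A a) * y a := by
  unfold hankelAdj hankel
  simp only [map_sum, Finset.sum_mul]
  rw [Finset.sum_comm]
  conv_rhs => rw [Finset.sum_comm]
  rw [Finset.sum_comm]
  refine Finset.sum_congr rfl fun i _ => ?_
  conv_rhs => rw [Finset.sum_comm]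
  refine Finset.sum_congr rfl fun j _ => ?_
  rw [Finset.sum_eq_single (⟨i.1 + j.1, by have hi := i.2; have hj := j.2; omega⟩ : Fin n)]
  · simp
  · intro b _ hb
    rw [if_neg]
    · simp
    · intro h; exact hb (Fin.ext h.symm)
  · simp

lemma normsq_add (u v : ℂ) :
    ‖u + v‖ ^ 2 = ‖u‖ ^ 2 + 2 * ((starRingEnd ℂ) u * v).re + ‖v‖ ^ 2 := by
  simp only [← Complex.normSq_eq_norm_sq, Complex.normSq_apply, Complex.mul_re, Complex.conj_re,
    Complex.conj_im, Complex.add_re, Complex.add_im]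
  ring

/-- The minimiser. -/
noncomputable def xmin (p q n : ℕ) (α β : ℝ) (Ω : Finset (Fin n))
    (s : Fin n → ℂ) (H : Matrix (Fin p) (Fin q) ℂ) : Fin n → ℂ :=
  Lop p q n α β Ω (projOmega n Ω s + β • hankelAdj p q n H)

lemma xmin_eq (p q n : ℕ) (α β : ℝ) (hα : 0 < α) (hβ : 0 < β) (Ω : Finset (Fin n))
    (s : Fin n → ℂ) (H : Matrix (Fin p) (Fin q) ℂ) (a : Fin n) :
    ((α : ℂ) + (if a ∈ Ω then 1 else 0) + (β : ℂ) * (w p q (a : ℕ) : ℂ)) * xmin p q n α β Ω s H a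
      = projOmega n Ω s a + β * hankelAdj p q n H a := by
  have hne : ((α : ℂ) + (if a ∈ Ω then 1 else 0) + (β : ℂ) * (w p q (a : ℕ) : ℂ)) ≠ 0 := by
    have h : (α + (if a ∈ Ω then 1 else 0) + β * (w p q (a : ℕ) : ℝ)) ≠ 0 := by
      have : (0:ℝ) ≤ (if a ∈ Ω then 1 else 0) := by split_ifs <;> norm_num
      positivity
    have h2 := Complex.ofReal_ne_zero.mpr h
    push_cast at h2
    convert h2 using 3
    split_ifs <;> simp
  unfold xmin Lop
  rw [mul_div_cancel₀ _ hne]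
  simp

/-- Linear part vanishes in `y`. -/
lemma stationarity (p q n : ℕ) (hn : p + q = n + 1) (α β : ℝ) (hα : 0 < α) (hβ : 0 < β)
    (Ω : Finset (Fin n)) (s : Fin n → ℂ) (H : Matrix (Fin p) (Fin q) ℂ) (y : Fin n → ℂ) :
    (∑ a, (starRingEnd ℂ) (s a - projOmega n Ω (xmin p q n α β Ω s H) a) * (- projOmega n Ω y a))
    - β * (∑ i : Fin p, ∑ j : Fin q,
      (starRingEnd ℂ) ((H - hankel p q n hn (xmin p q n α β Ω s H)) i j) * hankel p q n hn y i j)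
    + α * ∑ a, (starRingEnd ℂ) (xmin p q n α β Ω s H a) * y a = 0 := by
  rw [adj_identity, Finset.mul_sum, Finset.mul_sum, ← Finset.sum_sub_distrib,
    ← Finset.sum_add_distrib]
  refine Finset.sum_eq_zero fun a _ => ?_
  rw [hankelAdj_sub, hankelAdj_hankel]
  have h := congrArg (starRingEnd ℂ) (xmin_eq p q n α β hα hβ Ω s H a)
  generalize xmin p q n α β Ω s H = x at *
  unfold projOmega at *
  split_ifs at * <;> simp at h ⊢ <;> linear_combination (y a) * h

lemma key (p q n : ℕ) (hn : p + q = n + 1) (α β : ℝ) (hα : 0 < α) (hβ : 0 < β)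
    (Ω : Finset (Fin n)) (s : Fin n → ℂ) (H D : Matrix (Fin p) (Fin q) ℂ) (y : Fin n → ℂ) :
    hfun p q n hn α β Ω s (H + D) (xmin p q n α β Ω s H + y)
      = hfun p q n hn α β Ω s H (xmin p q n α β Ω s H)
        + frobInner p q (Gmap p q n hn α β Ω s H) D + hfun p q n hn α β Ω 0 D y := by
  have st := congrArg Complex.re (stationarity p q n hn α β hα hβ Ω s H y)
  have hG : Gmap p q n hn α β Ω s H
      = β • (H - hankel p q n hn (xmin p q n α β Ω s H)) := by
    rw [smul_sub]; rfl
  have hI : frobInner p q (Gmap p q n hn α β Ω s H) D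
      = β * (∑ i, ∑ j, ((starRingEnd ℂ)
        ((H - hankel p q n hn (xmin p q n α β Ω s H)) i j) * D i j).re) := by
    rw [hG]
    unfold frobInner
    simp only [Complex.re_sum, Finset.mul_sum]
    refine Finset.sum_congr rfl fun i _ => Finset.sum_congr rfl fun j _ => ?_
    rw [Matrix.smul_apply, Complex.real_smul, map_mul, Complex.conj_ofReal, mul_assoc,
      Complex.re_ofReal_mul]
  rw [hI]
  generalize xmin p q n α β Ω s H = x at *
  unfold hfun
  have e1 : ∀ a, ‖s a - projOmega n Ω (x + y) a‖ ^ 2 = ‖s a - projOmega n Ω x a‖ ^ 2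
      + 2 * ((starRingEnd ℂ) (s a - projOmega n Ω x a) * (- projOmega n Ω y a)).re
      + ‖(0 : Fin n → ℂ) a - projOmega n Ω y a‖ ^ 2 := by
    intro a
    have : s a - projOmega n Ω (x + y) a = (s a - projOmega n Ω x a) + (- projOmega n Ω y a) := by
      unfold projOmega; split_ifs <;> simp; ring
    rw [this, normsq_add]; simp
  have e2 : ∀ i j, ‖(H + D - hankel p q n hn (x + y)) i j‖ ^ 2
      = ‖(H - hankel p q n hn x) i j‖ ^ 2
      + (2 * ((starRingEnd ℂ) ((H - hankel p q n hn x) i j) * D i j).re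
        - 2 * ((starRingEnd ℂ) ((H - hankel p q n hn x) i j) * hankel p q n hn y i j).re)
      + ‖(D - hankel p q n hn y) i j‖ ^ 2 := by
    intro i j
    have : (H + D - hankel p q n hn (x + y)) i j
        = (H - hankel p q n hn x) i j + (D - hankel p q n hn y) i j := by
      simp [hankel]; ring
    rw [this, normsq_add, Matrix.sub_apply D, mul_sub, Complex.sub_re]; ring
  have e3 : ∀ a, ‖(x + y) a‖ ^ 2 = ‖x a‖ ^ 2 + 2 * ((starRingEnd ℂ) (x a) * y a).re
      + ‖y a‖ ^ 2 := fun a => normsq_add _ _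
  simp only [e1, e2, e3, Finset.sum_add_distrib, Finset.sum_sub_distrib, ← Finset.mul_sum]
  rw [Complex.add_re, Complex.sub_re, Complex.re_ofReal_mul, Complex.re_ofReal_mul] at st
  simp only [Complex.re_sum, Complex.zero_re] at st
  linear_combination st

lemma hfun_nonneg (p q n : ℕ) (hn : p + q = n + 1) (α β : ℝ) (hα : 0 < α) (hβ : 0 < β)
    (Ω : Finset (Fin n)) (s : Fin n → ℂ) (H : Matrix (Fin p) (Fin q) ℂ) (x : Fin n → ℂ) :
    0 ≤ hfun p q n hn α β Ω s H x := by
  unfold hfun; positivity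

lemma hfun_zero (p q n : ℕ) (hn : p + q = n + 1) (α β : ℝ)
    (Ω : Finset (Fin n)) (D : Matrix (Fin p) (Fin q) ℂ) :
    hfun p q n hn α β Ω 0 D 0 = β / 2 * frobNorm p q D ^ 2 := by
  unfold hfun frobNorm
  rw [Real.sq_sqrt (by positivity)]
  simp [projOmega, hankel]

lemma fobj_bounds (p q n : ℕ) (hn : p + q = n + 1) (α β : ℝ) (hα : 0 < α) (hβ : 0 < β)
    (Ω : Finset (Fin n)) (s : Fin n → ℂ) (H D : Matrix (Fin p) (Fin q) ℂ) :
    hfun p q n hn α β Ω s H (xmin p q n α β Ω s H)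
        + frobInner p q (Gmap p q n hn α β Ω s H) D ≤ fobj p q n hn α β Ω s (H + D) ∧
    fobj p q n hn α β Ω s (H + D) ≤ hfun p q n hn α β Ω s H (xmin p q n α β Ω s H)
        + frobInner p q (Gmap p q n hn α β Ω s H) D + β / 2 * frobNorm p q D ^ 2 := by
  constructor
  · refine le_ciInf fun x => ?_
    have h := key p q n hn α β hα hβ Ω s H D (x - xmin p q n α β Ω s H)
    rw [add_sub_cancel] at h
    rw [h]
    linarith [hfun_nonneg p q n hn α β hα hβ Ω 0 D (x - xmin p q n α β Ω s H)]
  · have h := key p q n hn α β hα hβ Ω s H D 0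
    rw [hfun_zero] at h
    rw [← h]
    exact ciInf_le ⟨0, by rintro _ ⟨x, rfl⟩; exact hfun_nonneg p q n hn α β hα hβ Ω s _ x⟩ _

/-- `f` is (real-)Fréchet differentiable at every `H`, with
gradient `G(H)` for the real inner product `Re tr(Aᴴ B)`:
`f(H+Δ) − f(H) − Re tr(G(H)ᴴ Δ) = o(‖Δ‖_F)` as `Δ → 0`. -/
theorem fobj_differentiable_gradient
    (p q n : ℕ) (hp : 0 < p) (hq : 0 < q) (hn : p + q = n + 1)
    (α β : ℝ) (hα : 0 < α) (hβ : 0 < β) (Ω : Finset (Fin n)) (s : Fin n → ℂ)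
    (H : Matrix (Fin p) (Fin q) ℂ) :
    (fun Δ : Matrix (Fin p) (Fin q) ℂ =>
        fobj p q n hn α β Ω s (H + Δ) - fobj p q n hn α β Ω s H
          - frobInner p q (Gmap p q n hn α β Ω s H) Δ)
      =o[nhds (0 : Matrix (Fin p) (Fin q) ℂ)]
        (fun Δ : Matrix (Fin p) (Fin q) ℂ => frobNorm p q Δ) := by
  have h0 : fobj p q n hn α β Ω s H = hfun p q n hn α β Ω s H (xmin p q n α β Ω s H) := by
    have h := fobj_bounds p q n hn α β hα hβ Ω s H 0
    simp only [add_zero] at h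
    have e : frobInner p q (Gmap p q n hn α β Ω s H) 0 = 0 := by simp [frobInner]
    have e' : frobNorm p q 0 = 0 := by simp [frobNorm]
    rw [e, e'] at h
    apply le_antisymm <;> linarith [h.1, h.2]
  have hc : Filter.Tendsto (frobNorm p q) (nhds 0) (nhds 0) := by
    have hcont : Continuous (frobNorm p q) := by
      unfold frobNorm
      refine Real.continuous_sqrt.comp ?_
      refine continuous_finsetSum _ fun i _ => continuous_finsetSum _ fun j _ => ?_
      exact ((continuous_id.matrix_elem i j).norm).pow 2
    have h := hcont.tendsto 0
    have e' : frobNorm p q 0 = 0 := by simp [frobNorm]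
    rwa [e'] at h
  have hO : (fun D : Matrix (Fin p) (Fin q) ℂ =>
        fobj p q n hn α β Ω s (H + D) - fobj p q n hn α β Ω s H
          - frobInner p q (Gmap p q n hn α β Ω s H) D)
      =O[nhds (0 : Matrix (Fin p) (Fin q) ℂ)] (fun D => frobNorm p q D * frobNorm p q D) := by
    refine Asymptotics.IsBigO.of_bound (β / 2) (Filter.Eventually.of_forall fun D => ?_)
    have h := fobj_bounds p q n hn α β hα hβ Ω s H D
    rw [h0, Real.norm_of_nonneg (by linarith [h.1]), Real.norm_of_nonneg (mul_self_nonneg _)]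
    nlinarith [h.2]
  refine hO.trans_isLittleO ?_
  have h1 : (frobNorm p q) =o[nhds 0] (fun _ => (1 : ℝ)) :=
    (Asymptotics.isLittleO_one_iff ℝ).mpr hc
  simpa using h1.mul_isBigO (Asymptotics.isBigO_refl (frobNorm p q) (nhds 0))

end LPPG
end

section
/- For every matrix A ∈ ℂ^{p×q}, the quadratic form of the operator 𝓗𝓛𝓗* satisfies 0 ≤ Re tr(Aᴴ · 𝓗(𝓛(𝓗*A))) ≤ (m/(α + βm)) · ‖A‖_F², where m := min(p, q). -/
open scoped BigOperators

namespace LPPG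

lemma aux_swap {M : Type*} [AddCommMonoid M] (p q n : ℕ) (hn : p + q = n + 1)
    (f : Fin n → Fin p → Fin q → M) :
    ∑ a : Fin n, ∑ i : Fin p, ∑ j : Fin q,
      (if (i : ℕ) + (j : ℕ) = (a : ℕ) then f a i j else 0) =
    ∑ i : Fin p, ∑ j : Fin q,
      f ⟨i.1 + j.1, by have hi := i.2; have hj := j.2; omega⟩ i j := by
  rw [Finset.sum_comm]
  refine Finset.sum_congr rfl fun i _ => ?_
  rw [Finset.sum_comm]
  refine Finset.sum_congr rfl fun j _ => ?_
  rw [Finset.sum_eq_single (⟨i.1 + j.1, by have hi := i.2; have hj := j.2; omega⟩ : Fin n)]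
  · simp
  · intro b _ hb
    rw [if_neg]
    intro h
    exact hb (Fin.ext h.symm)
  · simp

lemma w_le_min (p q a : ℕ) : w p q a ≤ min p q := by
  unfold w
  refine le_min ?_ ?_
  · have := Finset.card_le_card_of_injOn (s := Finset.univ.filter
      (fun ij : Fin p × Fin q => (ij.1 : ℕ) + (ij.2 : ℕ) = a)) (t := Finset.univ) Prod.fst
      (by intro x _; simp) (by
        rintro ⟨x, y⟩ hx ⟨x', y'⟩ hx' h
        simp at hx hx' h
        subst h
        simp only [Prod.mk.injEq, true_and]
        apply Fin.ext; omega)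
    simpa using this
  · have := Finset.card_le_card_of_injOn (s := Finset.univ.filter
      (fun ij : Fin p × Fin q => (ij.1 : ℕ) + (ij.2 : ℕ) = a)) (t := Finset.univ) Prod.snd
      (by intro x _; simp) (by
        rintro ⟨x, y⟩ hx ⟨x', y'⟩ hx' h
        simp at hx hx' h
        subst h
        simp only [Prod.mk.injEq, and_true]
        apply Fin.ext; omega)
    simpa using this

lemma adj_sq_le (p q n : ℕ) (A : Matrix (Fin p) (Fin q) ℂ) (a : Fin n) :
    ‖hankelAdj p q n A a‖ ^ 2 ≤ (w p q a : ℝ) *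
      ∑ i : Fin p, ∑ j : Fin q, (if (i : ℕ) + (j : ℕ) = (a : ℕ) then ‖A i j‖ ^ 2 else 0) := by
  unfold hankelAdj w
  rw [← Fintype.sum_prod_type' (fun (i : Fin p) (j : Fin q) =>
      if (i : ℕ) + (j : ℕ) = (a : ℕ) then A i j else 0),
    ← Fintype.sum_prod_type' (fun (i : Fin p) (j : Fin q) =>
      if (i : ℕ) + (j : ℕ) = (a : ℕ) then ‖A i j‖ ^ 2 else 0),
    ← Finset.sum_filter, ← Finset.sum_filter]
  refine le_trans (pow_le_pow_left₀ (norm_nonneg _) (norm_sum_le _ _) 2) ?_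
  exact sq_sum_le_card_mul_sum_sq

lemma frob_eq (p q n : ℕ) (hn : p + q = n + 1) (α β : ℝ) (Ω : Finset (Fin n))
    (A : Matrix (Fin p) (Fin q) ℂ) :
    frobInner p q A (hankel p q n hn (Lop p q n α β Ω (hankelAdj p q n A))) =
    ∑ a : Fin n, ‖hankelAdj p q n A a‖ ^ 2 /
      (α + (if a ∈ Ω then 1 else 0) + β * (w p q (a : ℕ) : ℝ)) := by
  unfold frobInner hankel
  rw [← aux_swap p q n hn (fun a i j => (starRingEnd ℂ) (A i j) *
    Lop p q n α β Ω (hankelAdj p q n A) a), Complex.re_sum]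
  refine Finset.sum_congr rfl fun a _ => ?_
  have h : ∑ i : Fin p, ∑ j : Fin q, (if (i : ℕ) + (j : ℕ) = (a : ℕ) then
      (starRingEnd ℂ) (A i j) * Lop p q n α β Ω (hankelAdj p q n A) a else 0) =
      (starRingEnd ℂ) (hankelAdj p q n A a) * Lop p q n α β Ω (hankelAdj p q n A) a := by
    conv_rhs => rw [hankelAdj]
    simp only [map_sum, Finset.sum_mul, apply_ite (starRingEnd ℂ), map_zero, ite_mul, zero_mul]
  rw [h]
  have h2 : (starRingEnd ℂ) (hankelAdj p q n A a) * Lop p q n α β Ω (hankelAdj p q n A) a =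
      ((‖hankelAdj p q n A a‖ ^ 2 /
      (α + (if a ∈ Ω then 1 else 0) + β * (w p q (a : ℕ) : ℝ)) : ℝ) : ℂ) := by
    unfold Lop
    rw [← mul_div_assoc, Complex.conj_mul']
    push_cast
    split_ifs <;> simp
  rw [h2, Complex.ofReal_re]

/-- for every `A ∈ ℂ^{p×q}`,
`0 ≤ Re tr(Aᴴ 𝓗(𝓛(𝓗*A))) ≤ (m/(α + βm))‖A‖_F²` where `m = min(p,q)`. -/
theorem quadratic_form_HLHadj_bounds
    (p q n : ℕ) (hp : 0 < p) (hq : 0 < q) (hn : p + q = n + 1)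
    (α β : ℝ) (hα : 0 < α) (hβ : 0 < β) (Ω : Finset (Fin n))
    (A : Matrix (Fin p) (Fin q) ℂ) :
    0 ≤ frobInner p q A (hankel p q n hn (Lop p q n α β Ω (hankelAdj p q n A))) ∧
    frobInner p q A (hankel p q n hn (Lop p q n α β Ω (hankelAdj p q n A)))
      ≤ ((min p q : ℝ) / (α + β * (min p q : ℝ)))
          * ∑ i : Fin p, ∑ j : Fin q, ‖A i j‖ ^ 2 := by
  rw [frob_eq]
  have hD : ∀ a : Fin n, 0 < α + (if a ∈ Ω then 1 else 0) + β * (w p q (a : ℕ) : ℝ) := by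
    intro a
    split_ifs <;> positivity
  refine ⟨Finset.sum_nonneg fun a _ => div_nonneg (sq_nonneg _) (hD a).le, ?_⟩
  rw [← aux_swap p q n hn (fun _ i j => ‖A i j‖ ^ 2), Finset.mul_sum]
  refine Finset.sum_le_sum fun a _ => ?_
  set T := ∑ i : Fin p, ∑ j : Fin q, (if (i : ℕ) + (j : ℕ) = (a : ℕ) then ‖A i j‖ ^ 2 else 0)
    with hT
  have hT0 : 0 ≤ T := Finset.sum_nonneg fun i _ => Finset.sum_nonneg fun j _ => by
    split_ifs <;> positivity
  have hw : (w p q a : ℝ) ≤ min (p : ℝ) (q : ℝ) := by exact_mod_cast w_le_min p q a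
  have hm : 0 < min (p : ℝ) (q : ℝ) := lt_min (by exact_mod_cast hp) (by exact_mod_cast hq)
  have hw0 : (0 : ℝ) ≤ w p q a := Nat.cast_nonneg _
  calc _ ≤ ((w p q a : ℝ) * T) / (α + (if a ∈ Ω then 1 else 0) + β * (w p q (a : ℕ) : ℝ)) :=
        div_le_div_of_nonneg_right (adj_sq_le p q n A a) (hD a).le
    _ = ((w p q a : ℝ) / (α + (if a ∈ Ω then 1 else 0) + β * (w p q (a : ℕ) : ℝ))) * T := by
        ring
    _ ≤ _ := by
        refine mul_le_mul_of_nonneg_right ?_ hT0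
        rw [div_le_div_iff₀ (hD a) (by positivity)]
        have h1 := mul_le_mul_of_nonneg_right hw hα.le
        have h2 : (0 : ℝ) ≤ min (p : ℝ) (q : ℝ) * (if a ∈ Ω then 1 else 0) := by
          split_ifs <;> simp
        nlinarith

end LPPG
end

section
/- Let E be a real inner product space, f : E → ℝ everywhere differentiable with gradient ∇f, and L ≥ 0 such that ‖∇f(u) − ∇f(v)‖ ≤ L‖u − v‖ for all u, v ∈ E. Let γ > 0, S ⊆ E, y ∈ S, and let x⁺ ∈ S minimize over S the proximal model u ↦ ⟨∇f(y), u − y⟩ + (1/(2γ))‖u − y‖². Then the proximal gradient step decreases f sufficiently: f(x⁺) ≤ f(y) − ((1/γ − L)/2) · ‖x⁺ − y‖². -/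
open scoped RealInnerProductSpace

namespace LPPG

/-- sufficient decrease of the proximal gradient step:
if `f : E → ℝ` has gradient `g` everywhere (i.e. `HasFDerivAt f ⟪g x, ·⟫ x`),
`g` is `L`-Lipschitz, `γ > 0`, `y ∈ S`, and `x⁺ ∈ S` minimizes the proximal
model `u ↦ ⟪g y, u − y⟫ + (1/(2γ))‖u − y‖²` over `S`, then
`f(x⁺) ≤ f(y) − ((1/γ − L)/2)‖x⁺ − y‖²`. -/
theorem prox_grad_sufficient_decrease
    {E : Type*} [NormedAddCommGroup E] [InnerProductSpace ℝ E]
    (f : E → ℝ) (g : E → E)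
    (hf : ∀ x : E, HasFDerivAt f (innerSL ℝ (g x)) x)
    (L : ℝ) (hL : 0 ≤ L)
    (hLip : ∀ u v : E, ‖g u - g v‖ ≤ L * ‖u - v‖)
    (γ : ℝ) (hγ : 0 < γ)
    (S : Set E) (y : E) (hy : y ∈ S)
    (xp : E) (hxp : xp ∈ S)
    (hmin : ∀ u ∈ S,
        ⟪g y, xp - y⟫ + (1 / (2 * γ)) * ‖xp - y‖ ^ 2
          ≤ ⟪g y, u - y⟫ + (1 / (2 * γ)) * ‖u - y‖ ^ 2) :
    f xp ≤ f y - ((1 / γ - L) / 2) * ‖xp - y‖ ^ 2 := by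
  have h0 := hmin y hy
  simp only [sub_self, inner_zero_right, norm_zero] at h0
  set d := xp - y with hd
  have hline : ∀ t : ℝ, HasDerivAt (fun t : ℝ => y + t • d) d t := by
    intro t
    simpa using ((hasDerivAt_id t).smul_const d).const_add y
  have hφ : ∀ t : ℝ, HasDerivAt
      (fun t : ℝ => f (y + t • d) - (t * ⟪g y, d⟫ + t ^ 2 * (L / 2 * ‖d‖ ^ 2)))
      (⟪g (y + t • d), d⟫ - (⟪g y, d⟫ + 2 * t * (L / 2 * ‖d‖ ^ 2))) t := by
    intro t
    have h1 : HasDerivAt (fun t : ℝ => f (y + t • d)) ⟪g (y + t • d), d⟫ t := by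
      exact (hf (y + t • d)).comp_hasDerivAt t (hline t)
    have h2 : HasDerivAt (fun t : ℝ => t * ⟪g y, d⟫) ⟪g y, d⟫ t := by
      simpa using (hasDerivAt_id t).mul_const ⟪g y, d⟫
    have h3 : HasDerivAt (fun t : ℝ => t ^ 2 * (L / 2 * ‖d‖ ^ 2))
        (2 * t * (L / 2 * ‖d‖ ^ 2)) t := by
      simpa using (hasDerivAt_pow 2 t).mul_const (L / 2 * ‖d‖ ^ 2)
    exact h1.sub (h2.add h3)
  obtain ⟨c, hc, hc'⟩ := exists_hasDerivAt_eq_slope _ _ (zero_lt_one' ℝ)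
    (fun t _ => (hφ t).continuousAt.continuousWithinAt) (fun t _ => hφ t)
  have hbound : ⟪g (y + c • d), d⟫ - ⟪g y, d⟫ ≤ c * (L * ‖d‖ ^ 2) := by
    rw [← inner_sub_left]
    have h1 := real_inner_le_norm (g (y + c • d) - g y) d
    have h2 := hLip (y + c • d) y
    rw [add_sub_cancel_left, norm_smul, Real.norm_of_nonneg hc.1.le] at h2
    have h3 := mul_le_mul_of_nonneg_right h2 (norm_nonneg d)
    nlinarith
  have e : y + d = xp := by rw [hd]; abel
  simp only [one_smul, zero_smul, add_zero, e] at hc'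
  have hg : 1 / γ = 2 * (1 / (2 * γ)) := by field_simp
  rw [hg]
  norm_num at hc' h0
  norm_num
  nlinarith

end LPPG
end

section
/- The partially minimized objective f is coercive with an explicit quadratic lower bound: for every H ∈ ℂ^{p×q}, f(H) ≥ (1/4) · min(β, α/m) · ‖H‖_F², where m := min(p, q). In particular every sublevel set of f is bounded, so the LPPG iterates, whose f-values do not exceed f(H₀), remain in a bounded set. -/
open scoped BigOperators

namespace LPPG

lemma sum_comp_inj_le {k n : ℕ} (f : Fin n → ℝ) (hf : ∀ a, 0 ≤ f a) (g : Fin k → Fin n)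
    (hg : Function.Injective g) : ∑ j, f (g j) ≤ ∑ a, f a := by
  classical
  have h : ∑ j, f (g j) = ∑ a ∈ Finset.univ.image g, f a :=
    (Finset.sum_image (fun a _ b _ hab => hg hab)).symm
  rw [h]
  exact Finset.sum_le_sum_of_subset_of_nonneg (Finset.subset_univ _) (fun a _ _ => hf a)

lemma hankel_bound (p q n : ℕ) (hn : p + q = n + 1) (x : Fin n → ℂ) :
    ∑ i : Fin p, ∑ j : Fin q, ‖hankel p q n hn x i j‖ ^ 2
      ≤ min (p : ℝ) (q : ℝ) * ∑ a : Fin n, ‖x a‖ ^ 2 := by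
  have hX : 0 ≤ ∑ a : Fin n, ‖x a‖ ^ 2 := by positivity
  rw [min_mul_of_nonneg _ _ hX]
  refine le_min ?_ ?_
  · calc _ ≤ ∑ i : Fin p, ∑ a : Fin n, ‖x a‖ ^ 2 := by
          refine Finset.sum_le_sum fun i _ => ?_
          refine sum_comp_inj_le (fun a => ‖x a‖ ^ 2) (fun a => by positivity)
            (fun j : Fin q => ⟨i.1 + j.1, by have hi := i.2; have hj := j.2; omega⟩) ?_
          intro a b hab
          simp only [Fin.mk.injEq] at hab
          exact Fin.ext (by omega)
      _ = _ := by simp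
  · rw [Finset.sum_comm]
    calc _ ≤ ∑ j : Fin q, ∑ a : Fin n, ‖x a‖ ^ 2 := by
          refine Finset.sum_le_sum fun j _ => ?_
          refine sum_comp_inj_le (fun a => ‖x a‖ ^ 2) (fun a => by positivity)
            (fun i : Fin p => ⟨i.1 + j.1, by have hi := i.2; have hj := j.2; omega⟩) ?_
          intro a b hab
          simp only [Fin.mk.injEq] at hab
          exact Fin.ext (by omega)
      _ = _ := by simp

/-- coercivity of the partially minimized objective:
`f(H) ≥ (1/4)·min(β, α/m)·‖H‖_F²` for every `H`, where `m = min(p,q)`. -/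
theorem fobj_coercive
    (p q n : ℕ) (hp : 0 < p) (hq : 0 < q) (hn : p + q = n + 1)
    (α β : ℝ) (hα : 0 < α) (hβ : 0 < β) (Ω : Finset (Fin n)) (s : Fin n → ℂ) :
    ∀ H : Matrix (Fin p) (Fin q) ℂ,
      (1 / 4) * min β (α / (min p q : ℝ)) * ∑ i : Fin p, ∑ j : Fin q, ‖H i j‖ ^ 2
        ≤ fobj p q n hn α β Ω s H := by
  intro H
  refine le_ciInf fun x => ?_
  unfold hfun
  have hB := hankel_bound p q n hn x
  have hS : 0 ≤ ∑ a : Fin n, ‖s a - projOmega n Ω x a‖ ^ 2 := by positivity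
  have hD : 0 ≤ ∑ i : Fin p, ∑ j : Fin q, ‖(H - hankel p q n hn x) i j‖ ^ 2 := by positivity
  have hX : 0 ≤ ∑ a : Fin n, ‖x a‖ ^ 2 := by positivity
  have hT : ∑ i : Fin p, ∑ j : Fin q, ‖H i j‖ ^ 2
      ≤ 2 * ∑ i : Fin p, ∑ j : Fin q, ‖(H - hankel p q n hn x) i j‖ ^ 2
        + 2 * ∑ i : Fin p, ∑ j : Fin q, ‖hankel p q n hn x i j‖ ^ 2 := by
    simp only [Finset.mul_sum, ← Finset.sum_add_distrib]
    refine Finset.sum_le_sum fun i _ => Finset.sum_le_sum fun j _ => ?_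
    have h1 : ‖H i j‖ ≤ ‖(H - hankel p q n hn x) i j‖ + ‖hankel p q n hn x i j‖ := by
      have := norm_add_le ((H - hankel p q n hn x) i j) (hankel p q n hn x i j)
      simpa using this
    have h0 := norm_nonneg (H i j)
    nlinarith [sq_nonneg (‖(H - hankel p q n hn x) i j‖ - ‖hankel p q n hn x i j‖)]
  have hm : (0 : ℝ) < min (p : ℝ) (q : ℝ) := lt_min (by exact_mod_cast hp) (by exact_mod_cast hq)
  have hc0 : 0 ≤ min β (α / min (p : ℝ) (q : ℝ)) := le_min hβ.le (by positivity)
  have hc1 : min β (α / min (p : ℝ) (q : ℝ)) ≤ β := min_le_left _ _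
  have hc2 : min β (α / min (p : ℝ) (q : ℝ)) * min (p : ℝ) (q : ℝ) ≤ α :=
    (le_div_iff₀ hm).1 (min_le_right _ _)
  generalize min β (α / min (p : ℝ) (q : ℝ)) = c at *
  have e1 := mul_le_mul_of_nonneg_left hT hc0
  have e2 := mul_le_mul_of_nonneg_left hB hc0
  have e3 := mul_le_mul_of_nonneg_right hc1 hD
  have e4 := mul_le_mul_of_nonneg_right hc2 hX
  rw [← mul_assoc] at e2
  linarith

end LPPG
end

section
/- Let p₁, q₁, n₁ and p₂, q₂, n₂ be positive integers with p₁ + q₁ = n₁ + 1 and p₂ + q₂ = n₂ + 1, let r be a positive integer, and let b ∈ ℂ^r, z₁ ∈ ℂ^r, z₂ ∈ ℂ^r. Define the array x ∈ ℂ^{n₁×n₂} by x[i,j] = Σ_{k=1}^r b_k z₁ₖ^i z₂ₖ^j. Then the two-level Hankel matrix 𝓗x ∈ ℂ^{p₁p₂ × q₁q₂} has rank at most r. -/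
open scoped BigOperators

namespace LPPG

/-- The two-level Hankel matrix of an array `x ∈ ℂ^{n₁×n₂}`:
`[𝓗x]_{u,v} = x[u₁ + v₁, u₂ + v₂]` where `u = u₁ + u₂·p₁` (`0 ≤ u₁ < p₁`,
`0 ≤ u₂ < p₂`) and `v = v₁ + v₂·q₁` (`0 ≤ v₁ < q₁`, `0 ≤ v₂ < q₂`). -/
noncomputable def hankel2 (p₁ q₁ n₁ p₂ q₂ n₂ : ℕ)
    (hp₁ : 0 < p₁) (hq₁ : 0 < q₁)
    (h₁ : p₁ + q₁ = n₁ + 1) (h₂ : p₂ + q₂ = n₂ + 1)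
    (x : Fin n₁ → Fin n₂ → ℂ) : Matrix (Fin (p₁ * p₂)) (Fin (q₁ * q₂)) ℂ :=
  fun u v =>
    x ⟨u.1 % p₁ + v.1 % q₁, by
        have h1 := Nat.mod_lt u.1 hp₁
        have h2 := Nat.mod_lt v.1 hq₁
        omega⟩
      ⟨u.1 / p₁ + v.1 / q₁, by
        have h1 : u.1 / p₁ < p₂ := Nat.div_lt_of_lt_mul u.2
        have h2 : v.1 / q₁ < q₂ := Nat.div_lt_of_lt_mul v.2
        omega⟩

/-- if `x[i,j] = Σ_{k=1}^r b_k z₁ₖ^i z₂ₖ^j`, then the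
two-level Hankel matrix `𝓗x ∈ ℂ^{p₁p₂×q₁q₂}` has rank at most `r`. -/
theorem hankel2_rank_le
    (p₁ q₁ n₁ p₂ q₂ n₂ r : ℕ)
    (hp₁ : 0 < p₁) (hq₁ : 0 < q₁) (hp₂ : 0 < p₂) (hq₂ : 0 < q₂) (hr : 0 < r)
    (h₁ : p₁ + q₁ = n₁ + 1) (h₂ : p₂ + q₂ = n₂ + 1)
    (b z₁ z₂ : Fin r → ℂ) (x : Fin n₁ → Fin n₂ → ℂ)
    (hx : ∀ (i : Fin n₁) (j : Fin n₂),
        x i j = ∑ k : Fin r, b k * z₁ k ^ (i : ℕ) * z₂ k ^ (j : ℕ)) :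
    (hankel2 p₁ q₁ n₁ p₂ q₂ n₂ hp₁ hq₁ h₁ h₂ x).rank ≤ r := by
  have key : hankel2 p₁ q₁ n₁ p₂ q₂ n₂ hp₁ hq₁ h₁ h₂ x =
      (Matrix.of fun (u : Fin (p₁ * p₂)) (k : Fin r) =>
        b k * z₁ k ^ (u.1 % p₁) * z₂ k ^ (u.1 / p₁)) *
      (Matrix.of fun (k : Fin r) (v : Fin (q₁ * q₂)) =>
        z₁ k ^ (v.1 % q₁) * z₂ k ^ (v.1 / q₁)) := by
    ext u v
    simp only [hankel2, hx, Matrix.mul_apply, Matrix.of_apply]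
    refine Finset.sum_congr rfl fun k _ => ?_
    rw [pow_add, pow_add]
    ring
  rw [key]
  refine (Matrix.rank_mul_le_left _ _).trans ?_
  exact (Matrix.rank_le_card_width _).trans (by simp)

end LPPG
end
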